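/- If a C*-algebra A has property max-U for all ultrafilters U, then every C*-algebra elementarily equivalent to A also has property max-U for all ultrafilters U. -/

import Mathlib

/-! For `π : (I → B) → P` an ultrapower and `x = ∑ π (f k) ⊗ π (g k)`, the norms
`maxNorm B B (∑ f k i ⊗ g k i)` are bounded, so they converge along `U` to some `l`, and the claim
is that `l = maxNorm P P x`.

`limit_le_maxNorm` gives `l ≤ maxNorm P P x` for every `B`: almost norming commuting
representations of `B`, one for each `i`, induce commuting representations of `P` on the
ultraproduct of their target algebras, and the norm of the image of `x` is the limit of the norms.

The reverse inequality, `maxNorm_le_limit`, is where elementary equivalence and the hypothesis on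
`A` enter. By a compactness argument (`exists_elementary`), `B` embeds elementarily in an
ultrapower `M` of `A` along an ultrafilter `V` on the maps from the unit ball of `B` to that of `A`;
an element `b` is sent to the class of the family of its images under these maps. Hence `P` embeds
in the ultrapower `Q` of `A` along the iterated ultrafilter `iter U V`.
Three estimates are combined.

* `maxNorm_le_of_push`: the norm of `x` in `P` is at most that of its image in `Q`. The embedding
  is existentially closed (`exists_approx`): finitely many *-polynomial equations with parameters
  from `P` that hold in `Q` have approximate solutions in `P`. An ultraproduct of these approximate
  retractions of `Q` onto `P` extends any commuting pair of representations of `P` to `Q`. This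
  plays the role of the relative weak injectivity of an algebra in its ultrapowers.
* Property max-`iter U V` of `A` expresses the norm in `Q` as an iterated limit, over `i` and then
  over the maps `s`, of norms in `A ⊗ A`, and for fixed `i` property max-`V` of `A` identifies
  the inner limit with a norm in `M ⊗ M`.
* `maxNorm_map_le`: this norm is at most `maxNorm B B (∑ f k i ⊗ g k i)`, by functoriality along
  `B → M`.

Homomorphisms on an ultrapower are obtained from maps on the unit ball respecting all *-polynomial
relations (`homOfRel`), which is the form in which continuous logic delivers them.
-/

open scoped TensorProduct
open Filter Topology Function

noncomputable section

/-- A pair of commuting unital *-representations of `A` and `B` on a common C*-algebra;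
these correspond exactly to the *-homomorphisms of the algebraic tensor product
`A ⊗[ℂ] B` into C*-algebras. -/
structure CommutingRepPair (A B : Type) [CStarAlgebra A] [CStarAlgebra B] : Type 1 where
  carrier : Type
  [inst : CStarAlgebra carrier]
  fst : A →⋆ₐ[ℂ] carrier
  snd : B →⋆ₐ[ℂ] carrier
  commutes : ∀ a b, Commute (fst a) (snd b)

attribute [instance] CommutingRepPair.inst

/-- The *-homomorphism `A ⊗[ℂ] B → C` induced by a commuting pair of representations. -/
def CommutingRepPair.hom {A B : Type} [CStarAlgebra A] [CStarAlgebra B]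
    (p : CommutingRepPair A B) : A ⊗[ℂ] B →ₐ[ℂ] p.carrier :=
  Algebra.TensorProduct.lift p.fst.toAlgHom p.snd.toAlgHom p.commutes

/-- The maximal tensor norm on `A ⊗[ℂ] B`: the supremum of `‖π x‖` over all
*-homomorphisms `π` of the algebraic tensor product into a C*-algebra, equivalently over
all pairs of commuting unital *-representations of `A` and `B`. -/
def maxNorm (A B : Type) [CStarAlgebra A] [CStarAlgebra B] (x : A ⊗[ℂ] B) : ℝ :=
  sSup {r : ℝ | ∃ p : CommutingRepPair A B, r = ‖p.hom x‖}

/-- A family of elements of C*-algebras is (uniformly norm-)bounded. -/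
def Bdd {I : Type} {A : I → Type} [∀ i, CStarAlgebra (A i)] (f : ∀ i, A i) : Prop :=
  ∃ M : ℝ, ∀ i, ‖f i‖ ≤ M

/-- `π : (∀ i, A i) → B` realizes `B` as the C*-algebra ultraproduct `∏_U A_i`, i.e. as
the quotient of the ℓ∞-product of the `A i` by the ideal of bounded families whose norms
tend to `0` along `U`:  `π` is a unital *-homomorphism on bounded families, every element
of `B` lifts to a bounded family (with control of norms), and the norm of `π f` is the
`U`-limit of the norms `‖f i‖`.  This data determines `B` uniquely up to isometric
*-isomorphism. -/
structure IsCStarUltraproduct {I : Type} (U : Ultrafilter I) (A : I → Type)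
    [∀ i, CStarAlgebra (A i)] (B : Type) [CStarAlgebra B]
    (π : (∀ i, A i) → B) : Prop where
  map_one : π 1 = 1
  map_add : ∀ f g, Bdd f → Bdd g → π (f + g) = π f + π g
  map_mul : ∀ f g, Bdd f → Bdd g → π (f * g) = π f * π g
  map_star : ∀ f, Bdd f → π (star f) = star (π f)
  map_smul : ∀ (c : ℂ) f, Bdd f → π (c • f) = c • π f
  norm_eq : ∀ f, Bdd f → Tendsto (fun i => ‖f i‖) (U : Filter I) (nhds ‖π f‖)
  surj : ∀ b : B, ∃ f, (∀ i, ‖f i‖ ≤ ‖b‖) ∧ π f = b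

/-- *-polynomial terms in `n` variables over `ℂ`: the terms of the continuous-logic
language of (unital) C*-algebras. -/
inductive CTerm : ℕ → Type
  | var {n : ℕ} : Fin n → CTerm n
  | one {n : ℕ} : CTerm n
  | add {n : ℕ} : CTerm n → CTerm n → CTerm n
  | mul {n : ℕ} : CTerm n → CTerm n → CTerm n
  | star {n : ℕ} : CTerm n → CTerm n
  | smul {n : ℕ} : ℂ → CTerm n → CTerm n

/-- Evaluation of a *-polynomial term in a C*-algebra. -/
def CTerm.eval {A : Type} [CStarAlgebra A] : ∀ {n : ℕ}, CTerm n → (Fin n → A) → A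
  | _, CTerm.var i, a => a i
  | _, CTerm.one, _ => 1
  | _, CTerm.add s t, a => CTerm.eval s a + CTerm.eval t a
  | _, CTerm.mul s t, a => CTerm.eval s a * CTerm.eval t a
  | _, CTerm.star t, a => Star.star (CTerm.eval t a)
  | _, CTerm.smul c t, a => c • CTerm.eval t a

/-- Formulas of the continuous-logic language of (unital) C*-algebras in `n` free
variables (all variables ranging over the closed unit ball): atomic formulas `‖t‖` for
*-polynomial terms `t`, closed under continuous combinations and the quantifiers
`sup` and `inf` over the unit ball. -/
inductive Formula : ℕ → Type
  | atom {n : ℕ} : CTerm n → Formula n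
  | comb {n k : ℕ} (u : (Fin k → ℝ) → ℝ) (hu : Continuous u)
      (phis : Fin k → Formula n) : Formula n
  | sup {n : ℕ} : Formula (n + 1) → Formula n
  | inf {n : ℕ} : Formula (n + 1) → Formula n

/-- The interpretation of a formula in a (unital) C*-algebra, the quantified variables
ranging over the closed unit ball. -/
def Formula.interp (A : Type) [CStarAlgebra A] :
    ∀ {n : ℕ}, Formula n → (Fin n → A) → ℝ
  | _, Formula.atom t, a => ‖t.eval a‖
  | _, Formula.comb u _ phis, a => u fun j => (phis j).interp A a
  | _, Formula.sup phi, a => ⨆ b : {x : A // ‖x‖ ≤ 1}, phi.interp A (Fin.snoc a b.1)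
  | _, Formula.inf phi, a => ⨅ b : {x : A // ‖x‖ ≤ 1}, phi.interp A (Fin.snoc a b.1)

/-- A sentence is a formula with no free variables. -/
abbrev Sentence := Formula 0

/-- A theory of (unital) C*-algebras: a set of sentences, each imposed as the condition
`σ = 0`. -/
abbrev CStarTheory := Set Sentence

/-- `A` is a model of the theory `T`. -/
def Models (A : Type) [CStarAlgebra A] (T : CStarTheory) : Prop :=
  ∀ σ ∈ T, σ.interp A finZeroElim = 0

/-- Two C*-algebras are elementarily equivalent if they satisfy the same sentences of
the continuous-logic language of C*-algebras; the models of `Th(A)` are exactly the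
C*-algebras elementarily equivalent to `A`. -/
def ElemEquiv (A B : Type) [CStarAlgebra A] [CStarAlgebra B] : Prop :=
  ∀ σ : Sentence, σ.interp A finZeroElim = σ.interp B finZeroElim

/-- `A` has property max-`U`: for every realization of the ultrapower `A^U` and every
ultrapower tensor `Σ_k a^k ⊗ b^k` (presented by bounded families of representatives), the
norm computed in `A^U ⊗_max A^U` agrees with the norm of its natural image in
`(A ⊗_max A)^U`, i.e. the unique *-homomorphism
`A^U ⊗_max A^U → (A ⊗_max A)^U` with `Σ a^k ⊗ b^k ↦ (Σ a^k_i ⊗ b^k_i)_U` is an isometric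
embedding. -/
def HasMaxU {I : Type} (U : Ultrafilter I) (A : Type) [CStarAlgebra A] : Prop :=
  ∀ (B : Type) [CStarAlgebra B] (π : (I → A) → B),
    IsCStarUltraproduct U (fun _ => A) B π →
    ∀ (n : ℕ) (f g : Fin n → I → A), (∀ k, Bdd (f k)) → (∀ k, Bdd (g k)) →
      Tendsto (fun i => maxNorm A A (∑ k, f k i ⊗ₜ[ℂ] g k i)) (U : Filter I)
        (nhds (maxNorm B B (∑ k, π (f k) ⊗ₜ[ℂ] π (g k))))

/-! ### Construction of ultraproducts -/

/-- A real-valued bounded function converges along an ultrafilter. -/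
lemma exists_tendsto_of_bdd {I : Type} (U : Ultrafilter I) (f : I → ℝ) (M : ℝ)
    (h : ∀ i, |f i| ≤ M) : ∃ l, Tendsto f U (𝓝 l) := by
  have hc : IsCompact (Set.Icc (-M) M) := isCompact_Icc
  obtain ⟨l, -, hl⟩ := hc.ultrafilter_le_nhds (U.map f) (by
    rw [le_principal_iff]
    exact Filter.mem_map.2 (Filter.univ_mem' fun i => abs_le.1 (h i)))
  exact ⟨l, hl⟩

section Construction

variable {I : Type} (U : Ultrafilter I) (C : I → Type) [∀ i, CStarAlgebra (C i)]

/-- The *-algebra of bounded families. -/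
def bddSub : StarSubalgebra ℂ (∀ i, C i) where
  carrier := {f | Bdd f}
  mul_mem' := by
    rintro f g ⟨M, hM⟩ ⟨N, hN⟩
    exact ⟨M * N, fun i => (norm_mul_le _ _).trans
      (mul_le_mul (hM i) (hN i) (norm_nonneg _) ((norm_nonneg _).trans (hM i)))⟩
  add_mem' := by
    rintro f g ⟨M, hM⟩ ⟨N, hN⟩
    exact ⟨M + N, fun i => (norm_add_le _ _).trans (add_le_add (hM i) (hN i))⟩
  algebraMap_mem' := by
    intro r
    refine ⟨‖r‖, fun i => ?_⟩
    rw [Pi.algebraMap_apply, Algebra.algebraMap_eq_smul_one, norm_smul]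
    refine mul_le_of_le_one_right (norm_nonneg _) ?_
    rcases subsingleton_or_nontrivial (C i) with h | h
    · rw [Subsingleton.elim (1 : C i) 0, norm_zero]; exact zero_le_one
    · exact CStarRing.norm_one.le
  star_mem' := by
    rintro f ⟨M, hM⟩
    exact ⟨M, fun i => by simpa using hM i⟩

/-- The bounded families, to be seminormed by the limit of the norms along `U`. -/
def PreU (_ : Ultrafilter I) (C : I → Type) [∀ i, CStarAlgebra (C i)] : Type := bddSub C

variable {C} in
/-- A bounded family as an element of the algebra of bounded families. -/
def PreU.of (f : ∀ i, C i) (h : Bdd f) : PreU U C := ⟨f, h⟩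

instance : Ring (PreU U C) := inferInstanceAs (Ring (bddSub C))
instance : Algebra ℂ (PreU U C) := inferInstanceAs (Algebra ℂ (bddSub C))
instance : StarRing (PreU U C) := inferInstanceAs (StarRing (bddSub C))
instance : StarModule ℂ (PreU U C) := inferInstanceAs (StarModule ℂ (bddSub C))

variable {U C}

lemma PreU.exists_lim (f : PreU U C) :
    ∃ l, Tendsto (fun i => ‖(f.1 : ∀ i, C i) i‖) U (𝓝 l) := by
  obtain ⟨M, hM⟩ := f.2
  exact exists_tendsto_of_bdd U _ M fun i => by simpa using hM i

/-- The limit along `U` of the norms of a bounded family. -/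
def PreU.lim (f : PreU U C) : ℝ := Classical.choose f.exists_lim

lemma PreU.tendsto_lim (f : PreU U C) :
    Tendsto (fun i => ‖(f.1 : ∀ i, C i) i‖) U (𝓝 f.lim) := Classical.choose_spec f.exists_lim

lemma PreU.lim_eq (f : PreU U C) {l : ℝ}
    (h : Tendsto (fun i => ‖(f.1 : ∀ i, C i) i‖) U (𝓝 l)) : f.lim = l :=
  tendsto_nhds_unique f.tendsto_lim h

lemma PreU.lim_mul_le (f g : PreU U C) : (f * g).lim ≤ f.lim * g.lim :=
  le_of_tendsto_of_tendsto' (f * g).tendsto_lim (f.tendsto_lim.mul g.tendsto_lim)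
    fun _ => norm_mul_le _ _

instance : SeminormedRing (PreU U C) where
  __ := (inferInstance : Ring (PreU U C))
  __ := AddGroupSeminorm.toSeminormedAddCommGroup
    { toFun := PreU.lim (U := U) (C := C)
      map_zero' := PreU.lim_eq _ (by
        refine Tendsto.congr (f₁ := fun _ => 0) (fun i => ?_) tendsto_const_nhds
        exact norm_zero.symm)
      add_le' := fun f g => le_of_tendsto_of_tendsto' (f + g).tendsto_lim
        (f.tendsto_lim.add g.tendsto_lim) fun _ => norm_add_le _ _
      neg' := fun f => PreU.lim_eq _ (f.tendsto_lim.congr fun i => (norm_neg _).symm) }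
  norm_mul_le := PreU.lim_mul_le

lemma PreU.norm_def (f : PreU U C) : ‖f‖ = f.lim := rfl

instance : NormedAlgebra ℂ (PreU U C) where
  norm_smul_le r f := (PreU.lim_eq (r • f) ((f.tendsto_lim.const_mul ‖r‖).congr
    fun _ => (norm_smul _ _).symm)).le

lemma PreU.norm_star (f : PreU U C) : ‖star f‖ = ‖f‖ :=
  PreU.lim_eq _ (f.tendsto_lim.congr fun _ => (_root_.norm_star _).symm)

lemma PreU.norm_mul_self_le (f : PreU U C) : ‖f‖ * ‖f‖ ≤ ‖star f * f‖ :=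
  le_of_tendsto_of_tendsto' (f.tendsto_lim.mul f.tendsto_lim) (star f * f).tendsto_lim
    fun _ => CStarRing.norm_mul_self_le _

variable (U C) in
/-- The ultraproduct of the `C i`: bounded families modulo families of limit norm zero. -/
abbrev UProd : Type := SeparationQuotient (PreU U C)

lemma PreU.star_inseparable {f g : PreU U C} (h : Inseparable f g) :
    (SeparationQuotient.mk (star f) : UProd U C) = SeparationQuotient.mk (star g) := by
  rw [SeparationQuotient.mk_eq_mk, Metric.inseparable_iff, dist_eq_norm] at *
  rw [← star_sub, PreU.norm_star, h]

instance : StarRing (UProd U C) where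
  star := SeparationQuotient.lift (fun f => SeparationQuotient.mk (star f))
    fun _ _ h => PreU.star_inseparable h
  star_involutive := by
    intro x
    obtain ⟨f, rfl⟩ := SeparationQuotient.surjective_mk x
    exact congrArg SeparationQuotient.mk (star_star f)
  star_mul := by
    intro x y
    obtain ⟨f, rfl⟩ := SeparationQuotient.surjective_mk x
    obtain ⟨g, rfl⟩ := SeparationQuotient.surjective_mk y
    exact congrArg SeparationQuotient.mk (star_mul f g)
  star_add := by
    intro x y
    obtain ⟨f, rfl⟩ := SeparationQuotient.surjective_mk x
    obtain ⟨g, rfl⟩ := SeparationQuotient.surjective_mk y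
    exact congrArg SeparationQuotient.mk (star_add f g)

lemma UProd.star_mk (f : PreU U C) :
    star (SeparationQuotient.mk f : UProd U C) = SeparationQuotient.mk (star f) := rfl

lemma UProd.norm_mk (f : PreU U C) : ‖(SeparationQuotient.mk f : UProd U C)‖ = f.lim := rfl

/-- Truncating the coordinates of a representative at the limit norm does not change its class. -/
lemma UProd.exists_rep (x : UProd U C) :
    ∃ f : PreU U C, (∀ i, ‖(f.1 : ∀ i, C i) i‖ ≤ ‖x‖) ∧ SeparationQuotient.mk f = x := by
  obtain ⟨f, rfl⟩ := SeparationQuotient.surjective_mk x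
  rw [UProd.norm_mk]
  set M := f.lim with hM
  have hM0 : 0 ≤ M := norm_nonneg (SeparationQuotient.mk f : UProd U C)
  set F : ∀ i, C i := f.1 with hF
  let g : ∀ i, C i := fun i => if ‖F i‖ ≤ M then F i else ((M / ‖F i‖ : ℝ) : ℂ) • F i
  have hg : ∀ i, ‖g i‖ ≤ M := by
    intro i
    by_cases h : ‖F i‖ ≤ M
    · simpa only [g, if_pos h] using h
    · have h0 : 0 < ‖F i‖ := hM0.trans_lt (not_le.1 h)
      simp only [g, if_neg h, norm_smul, Complex.norm_real, Real.norm_eq_abs]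
      rw [abs_of_nonneg (div_nonneg hM0 h0.le), div_mul_cancel₀ _ h0.ne']
  refine ⟨PreU.of U g ⟨M, hg⟩, hg, ?_⟩
  rw [SeparationQuotient.mk_eq_mk, Metric.inseparable_iff, dist_eq_norm]
  refine PreU.lim_eq _ ?_
  have hlim : Tendsto (fun i => |M - ‖F i‖|) U (𝓝 0) := by
    have h := ((tendsto_const_nhds (x := M)).sub f.tendsto_lim).abs
    rwa [← hM, sub_self, abs_zero] at h
  refine squeeze_zero (fun i => norm_nonneg _) (fun i => ?_) hlim
  change ‖g i - F i‖ ≤ _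
  by_cases h : ‖F i‖ ≤ M
  · simp only [g, if_pos h, sub_self, norm_zero]; positivity
  · have h0 : 0 < ‖F i‖ := hM0.trans_lt (not_le.1 h)
    have : g i - F i = ((M / ‖F i‖ - 1 : ℝ) : ℂ) • F i := by
      simp only [g, if_neg h]; push_cast; rw [sub_smul, one_smul]
    rw [this, norm_smul, Complex.norm_real, Real.norm_eq_abs]
    nth_rewrite 2 [← abs_of_pos h0]
    rw [← abs_mul, sub_mul, div_mul_cancel₀ _ h0.ne', one_mul]

/-- Absolutely convergent series in the ultraproduct lift to uniformly absolutely convergent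
series of bounded families, which can be summed coordinatewise. -/
instance : CompleteSpace (UProd U C) := by
  refine NormedAddCommGroup.completeSpace_of_summable_imp_tendsto fun x hx => ?_
  choose f hf hfx using fun k => UProd.exists_rep (x k)
  have hs : ∀ i, Summable fun k => ‖((f k).1 : ∀ i, C i) i‖ := fun i =>
    Summable.of_nonneg_of_le (fun _ => norm_nonneg _) (fun k => hf k i) hx
  let G : ∀ i, C i := fun i => ∑' k, ((f k).1 : ∀ i, C i) i
  have hG : ∀ i, ‖G i‖ ≤ ∑' k, ‖x k‖ := fun i =>
    (norm_tsum_le_tsum_norm (hs i)).trans ((hs i).tsum_le_tsum (fun k => hf k i) hx)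
  let g : PreU U C := PreU.of U G ⟨_, hG⟩
  refine ⟨SeparationQuotient.mk g, ?_⟩
  rw [tendsto_iff_norm_sub_tendsto_zero]
  have ht := tendsto_sum_nat_add fun k => ‖x k‖
  refine squeeze_zero (fun _ => norm_nonneg _) (fun n => ?_) ht
  have hsum : ∑ k ∈ Finset.range n, x k =
      SeparationQuotient.mk (∑ k ∈ Finset.range n, f k) := by
    simp_rw [← hfx]
    exact (map_sum (SeparationQuotient.mkAddMonoidHom (M := PreU U C)) f _).symm
  rw [hsum, ← SeparationQuotient.mk_sub, UProd.norm_mk]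
  refine le_of_tendsto' (PreU.tendsto_lim _) fun i => ?_
  have hcoe : ((∑ k ∈ Finset.range n, f k - g : PreU U C).1 : ∀ i, C i) i
      = ∑ k ∈ Finset.range n, ((f k).1 : ∀ i, C i) i - G i := by
    have : ((∑ k ∈ Finset.range n, f k : PreU U C).1 : ∀ i, C i) i
        = ∑ k ∈ Finset.range n, ((f k).1 : ∀ i, C i) i := by
      refine (congrFun (map_sum (bddSub C).subtype.toAlgHom.toRingHom f _) i).trans ?_
      exact Finset.sum_apply _ _ _
    rw [← this]; rfl
  rw [hcoe, norm_sub_rev]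
  have hd : G i - ∑ k ∈ Finset.range n, ((f k).1 : ∀ i, C i) i
      = ∑' k, ((f (k + n)).1 : ∀ i, C i) i := by
    rw [sub_eq_iff_eq_add', (hs i).of_norm.sum_add_tsum_nat_add]
  rw [hd]
  have hs' := (summable_nat_add_iff n).2 (hs i)
  exact (norm_tsum_le_tsum_norm hs').trans
    (hs'.tsum_le_tsum (fun k => hf _ i) ((summable_nat_add_iff n).2 hx))

instance : CStarAlgebra (UProd U C) where
  norm_mul_self_le x := by
    obtain ⟨f, rfl⟩ := SeparationQuotient.surjective_mk x
    exact PreU.norm_mul_self_le f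
  star_smul r x := by
    obtain ⟨f, rfl⟩ := SeparationQuotient.surjective_mk x
    exact congrArg SeparationQuotient.mk (star_smul r f)

variable (U C) in
open Classical in
/-- Every family of C*-algebras has an ultraproduct. -/
lemma exists_ultraproduct : ∃ (P : Type) (_ : CStarAlgebra P) (π : (∀ i, C i) → P),
    IsCStarUltraproduct U C P π := by
  refine ⟨UProd U C, inferInstance,
    fun f => if h : Bdd f then SeparationQuotient.mk (PreU.of U f h) else 0, ?_⟩
  have hone : Bdd (1 : ∀ i, C i) := (bddSub C).one_mem
  refine ⟨?_, ?_, ?_, ?_, ?_, ?_, ?_⟩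
  · rw [dif_pos hone]; rfl
  · intro f g hf hg
    have h : Bdd (f + g) := (bddSub C).add_mem hf hg
    rw [dif_pos hf, dif_pos hg, dif_pos h]; rfl
  · intro f g hf hg
    have h : Bdd (f * g) := (bddSub C).mul_mem hf hg
    rw [dif_pos hf, dif_pos hg, dif_pos h]; rfl
  · intro f hf
    have h : Bdd (star f) := (bddSub C).star_mem' hf
    rw [dif_pos hf, dif_pos h]; rfl
  · intro c f hf
    have h : Bdd (c • f) := (bddSub C).toSubalgebra.smul_mem hf c
    rw [dif_pos hf, dif_pos h]; rfl
  · intro f hf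
    rw [dif_pos hf]
    exact PreU.tendsto_lim _
  · intro b
    obtain ⟨f, hf, hfb⟩ := UProd.exists_rep b
    have h : Bdd (f.1 : ∀ i, C i) := f.2
    exact ⟨f.1, hf, (dif_pos h).trans hfb⟩

end Construction

/-! ### Calculus in ultraproducts -/

section Bounded

variable {I : Type} {C : I → Type} [∀ i, CStarAlgebra (C i)]

lemma Bdd.add {f g : ∀ i, C i} (hf : Bdd f) (hg : Bdd g) : Bdd (f + g) :=
  (bddSub C).add_mem hf hg

lemma Bdd.mul {f g : ∀ i, C i} (hf : Bdd f) (hg : Bdd g) : Bdd (f * g) :=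
  (bddSub C).mul_mem hf hg

lemma Bdd.star {f : ∀ i, C i} (hf : Bdd f) : Bdd (star f) := (bddSub C).star_mem' hf

lemma Bdd.smul (c : ℂ) {f : ∀ i, C i} (hf : Bdd f) : Bdd (c • f) :=
  (bddSub C).toSubalgebra.smul_mem hf c

lemma Bdd.one : Bdd (1 : ∀ i, C i) := (bddSub C).one_mem

lemma Bdd.sub {f g : ∀ i, C i} (hf : Bdd f) (hg : Bdd g) : Bdd (f - g) :=
  sub_mem (S := Subalgebra ℂ (∀ i, C i)) (H := (bddSub C).toSubalgebra) hf hg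

lemma Bdd.sum {ι : Type} (s : Finset ι) {f : ι → ∀ i, C i} (hf : ∀ k, Bdd (f k)) :
    Bdd (∑ k ∈ s, f k) :=
  (bddSub C).toSubalgebra.sum_mem fun k _ => hf k

lemma Bdd.of_le_one {f : ∀ i, C i} (hf : ∀ i, ‖f i‖ ≤ 1) : Bdd f := ⟨1, hf⟩

lemma Bdd.map {D : I → Type} [∀ i, CStarAlgebra (D i)] {f : ∀ i, C i} (hf : Bdd f)
    (φ : ∀ i, C i →⋆ₐ[ℂ] D i) : Bdd fun i => φ i (f i) := by
  obtain ⟨M, hM⟩ := hf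
  exact ⟨M, fun i => (NonUnitalStarAlgHom.norm_apply_le _ _).trans (hM i)⟩

lemma Bdd.eval {n : ℕ} (t : CTerm n) {f : Fin n → ∀ i, C i} (hf : ∀ k, Bdd (f k)) :
    Bdd fun i => t.eval fun k => f k i := by
  induction t with
  | var k => simpa only [CTerm.eval] using hf k
  | one => simp only [CTerm.eval]; exact Bdd.one
  | add s t hs ht => simp only [CTerm.eval]; exact hs.add ht
  | mul s t hs ht => simp only [CTerm.eval]; exact hs.mul ht
  | star t ht => simp only [CTerm.eval]; exact ht.star
  | smul c t ht => simp only [CTerm.eval]; exact ht.smul c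

end Bounded

lemma CTerm.eval_map {A B : Type} [CStarAlgebra A] [CStarAlgebra B] (φ : A →⋆ₐ[ℂ] B) {n : ℕ}
    (t : CTerm n) (a : Fin n → A) : t.eval (fun k => φ (a k)) = φ (t.eval a) := by
  induction t with
  | var k => simp only [CTerm.eval]
  | one => simp only [CTerm.eval, map_one]
  | add s t hs ht => simp only [CTerm.eval, hs, ht, map_add]
  | mul s t hs ht => simp only [CTerm.eval, hs, ht, map_mul]
  | star t ht => simp only [CTerm.eval, ht, map_star]
  | smul c t ht => simp only [CTerm.eval, ht, map_smul]

namespace IsCStarUltraproduct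

variable {I : Type} {U : Ultrafilter I} {C : I → Type} [∀ i, CStarAlgebra (C i)]
  {P : Type} [CStarAlgebra P] {π : (∀ i, C i) → P}

lemma map_sub (h : IsCStarUltraproduct U C P π)
    {f g : ∀ i, C i} (hf : Bdd f) (hg : Bdd g) : π (f - g) = π f - π g := by
  have e : f - g = f + (-1 : ℂ) • g := by rw [neg_one_smul, sub_eq_add_neg]
  rw [e, h.map_add _ _ hf (hg.smul _), h.map_smul _ _ hg, neg_one_smul, sub_eq_add_neg]

lemma map_zero (h : IsCStarUltraproduct U C P π) : π 0 = 0 := by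
  have := h.map_sub Bdd.one Bdd.one
  simpa using this

lemma map_sum (h : IsCStarUltraproduct U C P π)
    {ι : Type} (s : Finset ι) {f : ι → ∀ i, C i} (hf : ∀ k, Bdd (f k)) :
    π (∑ k ∈ s, f k) = ∑ k ∈ s, π (f k) := by
  classical
  induction s using Finset.induction_on with
  | empty => simpa using h.map_zero
  | insert a s ha ih =>
    rw [Finset.sum_insert ha, Finset.sum_insert ha, h.map_add _ _ (hf a) (Bdd.sum s hf), ih]

lemma map_sum_mul (h : IsCStarUltraproduct U C P π)
    {ι : Type} (s : Finset ι) {f g : ι → ∀ i, C i} (hf : ∀ k, Bdd (f k))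
    (hg : ∀ k, Bdd (g k)) :
    π (fun i => ∑ k ∈ s, f k i * g k i) = ∑ k ∈ s, π (f k) * π (g k) := by
  have e : (fun i => ∑ k ∈ s, f k i * g k i) = ∑ k ∈ s, f k * g k := by
    ext i; simp
  rw [e, h.map_sum s fun k => (hf k).mul (hg k)]
  exact Finset.sum_congr rfl fun k _ => h.map_mul _ _ (hf k) (hg k)

lemma map_eval (h : IsCStarUltraproduct U C P π)
    {n : ℕ} (t : CTerm n) {f : Fin n → ∀ i, C i} (hf : ∀ k, Bdd (f k)) :
    π (fun i => t.eval fun k => f k i) = t.eval fun k => π (f k) := by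
  induction t with
  | var k => simp only [CTerm.eval]
  | one => simp only [CTerm.eval]; exact h.map_one
  | add s t hs ht =>
    simp only [CTerm.eval, ← hs, ← ht]
    exact h.map_add _ _ (Bdd.eval s hf) (Bdd.eval t hf)
  | mul s t hs ht =>
    simp only [CTerm.eval, ← hs, ← ht]
    exact h.map_mul _ _ (Bdd.eval s hf) (Bdd.eval t hf)
  | star t ht =>
    simp only [CTerm.eval, ← ht]
    exact h.map_star _ (Bdd.eval t hf)
  | smul c t ht =>
    simp only [CTerm.eval, ← ht]
    exact h.map_smul _ _ (Bdd.eval t hf)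

lemma tendsto_eval (h : IsCStarUltraproduct U C P π)
    {n : ℕ} (t : CTerm n) {f : Fin n → ∀ i, C i} (hf : ∀ k, Bdd (f k)) :
    Tendsto (fun i => ‖t.eval fun k => f k i‖) U (𝓝 ‖t.eval fun k => π (f k)‖) := by
  rw [← h.map_eval t hf]
  exact h.norm_eq _ (Bdd.eval t hf)

lemma norm_le (h : IsCStarUltraproduct U C P π)
    {f : ∀ i, C i} {M : ℝ} (hf : ∀ i, ‖f i‖ ≤ M) : ‖π f‖ ≤ M :=
  le_of_tendsto' (h.norm_eq f ⟨M, hf⟩) hf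

lemma eq_of_tendsto (h : IsCStarUltraproduct U C P π) {f g : ∀ i, C i} (hf : Bdd f) (hg : Bdd g)
    (hfg : Tendsto (fun i => ‖f i - g i‖) U (𝓝 0)) : π f = π g := by
  rw [← sub_eq_zero, ← norm_eq_zero, ← h.map_sub hf hg]
  exact tendsto_nhds_unique (h.norm_eq _ (hf.sub hg)) hfg

lemma tendsto_of_eq (h : IsCStarUltraproduct U C P π)
    {f g : ∀ i, C i} (hf : Bdd f) (hg : Bdd g) (hfg : π f = π g) :
    Tendsto (fun i => ‖f i - g i‖) U (𝓝 0) := by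
  have := h.norm_eq _ (hf.sub hg)
  rwa [h.map_sub hf hg, hfg, sub_self, norm_zero] at this

lemma commute (h : IsCStarUltraproduct U C P π)
    {f g : ∀ i, C i} (hf : Bdd f) (hg : Bdd g) (hc : ∀ i, Commute (f i) (g i)) :
    Commute (π f) (π g) := by
  rw [Commute, SemiconjBy, ← h.map_mul _ _ hf hg, ← h.map_mul _ _ hg hf]
  exact congrArg π (funext fun i => (hc i).eq)

end IsCStarUltraproduct

/-! ### Homomorphisms from relations between elements of the unit ball -/

/-- The normalization `x / ‖x‖` (with value `0` at `0`). -/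
def dir {X : Type} [CStarAlgebra X] (x : X) : X := ((‖x‖⁻¹ : ℝ) : ℂ) • x

section Dir

variable {X : Type} [CStarAlgebra X]

lemma norm_dir_le (x : X) : ‖dir x‖ ≤ 1 := by
  rw [dir, norm_smul, Complex.norm_real, norm_inv, norm_norm]
  exact inv_mul_le_one

lemma norm_smul_dir (x : X) : (‖x‖ : ℂ) • dir x = x := by
  rcases eq_or_ne x 0 with rfl | hx
  · simp
  · rw [dir, smul_smul, Complex.ofReal_inv, mul_inv_cancel₀, one_smul]
    exact_mod_cast norm_ne_zero_iff.2 hx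

/-- A map `τ` respecting all *-polynomial relations between normalized elements extends
to the *-homomorphism `x ↦ ‖x‖ τ x`. -/
def homOfRel {P : Type} [CStarAlgebra P] (τ : X → P)
    (hτ : ∀ (n : ℕ) (t : CTerm n) (v : Fin n → X), t.eval (fun k => dir (v k)) = 0 →
      t.eval (fun k => τ (v k)) = 0) : X →⋆ₐ[ℂ] P where
  toFun x := (‖x‖ : ℂ) • τ x
  map_one' := by
    have := hτ 1 (.add (.smul ‖(1 : X)‖ (.var 0)) (.smul (-1) .one)) ![1]
    simp only [CTerm.eval, Matrix.cons_val, norm_smul_dir, neg_one_smul, add_neg_eq_zero,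
      forall_const] at this
    exact this
  map_mul' x y := by
    have := hτ 3 (.add (.mul (.smul ‖x‖ (.var 0)) (.smul ‖y‖ (.var 1)))
      (.smul (-1) (.smul ‖x * y‖ (.var 2)))) ![x, y, x * y]
    simp only [CTerm.eval, Matrix.cons_val, norm_smul_dir, neg_one_smul, add_neg_eq_zero,
      forall_const] at this
    exact this.symm
  map_zero' := by simp
  map_add' x y := by
    have := hτ 3 (.add (.add (.smul ‖x‖ (.var 0)) (.smul ‖y‖ (.var 1)))
      (.smul (-1) (.smul ‖x + y‖ (.var 2)))) ![x, y, x + y]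
    simp only [CTerm.eval, Matrix.cons_val, norm_smul_dir, neg_one_smul, add_neg_eq_zero,
      forall_const] at this
    exact this.symm
  commutes' c := by
    have := hτ 1 (.add (.smul ‖algebraMap ℂ X c‖ (.var 0)) (.smul (-1) (.smul c .one)))
      ![algebraMap ℂ X c]
    simp only [CTerm.eval, Matrix.cons_val, norm_smul_dir, neg_one_smul, add_neg_eq_zero,
      ← Algebra.algebraMap_eq_smul_one, forall_const] at this
    exact this
  map_star' x := by
    have := hτ 2 (.add (.star (.smul ‖x‖ (.var 0))) (.smul (-1) (.smul ‖star x‖ (.var 1))))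
      ![x, star x]
    simp only [CTerm.eval, Matrix.cons_val, norm_smul_dir, neg_one_smul, add_neg_eq_zero,
      forall_const] at this
    exact this.symm

end Dir

/-! ### Definable predicates and elementary embeddings -/

/-- The closed unit ball, over which the variables of formulas range. -/
abbrev Ball (A : Type) [CStarAlgebra A] : Type := {x : A // ‖x‖ ≤ 1}

/-- The origin of the unit ball. -/
def Ball.zero (A : Type) [CStarAlgebra A] : Ball A := ⟨0, by simp⟩

instance (A : Type) [CStarAlgebra A] : Nonempty (Ball A) := ⟨Ball.zero A⟩

/-- Substitution of variables in a term. -/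
def CTerm.rename {n m : ℕ} (r : Fin n → Fin m) : CTerm n → CTerm m
  | .var k => .var (r k)
  | .one => .one
  | .add s t => .add (s.rename r) (t.rename r)
  | .mul s t => .mul (s.rename r) (t.rename r)
  | .star t => .star (t.rename r)
  | .smul c t => .smul c (t.rename r)

lemma CTerm.eval_rename {A : Type} [CStarAlgebra A] {n m : ℕ} (r : Fin n → Fin m) (t : CTerm n)
    (a : Fin m → A) : (t.rename r).eval a = t.eval fun k => a (r k) := by
  induction t <;> simp_all [CTerm.eval, CTerm.rename]

/-- Substitution of free variables in a formula. -/
def Formula.rename : ∀ {n : ℕ}, Formula n → ∀ {m : ℕ}, (Fin n → Fin m) → Formula m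
  | _, .atom t, _, r => .atom (t.rename r)
  | _, .comb u hu phis, _, r => .comb u hu fun j => (phis j).rename r
  | _, .sup φ, m, r => .sup (φ.rename (Fin.snoc (fun k => (r k).castSucc) (Fin.last m)))
  | _, .inf φ, m, r => .inf (φ.rename (Fin.snoc (fun k => (r k).castSucc) (Fin.last m)))

lemma snoc_comp_snoc {A : Type} {n m : ℕ} (r : Fin n → Fin m) (a : Fin m → A) (b : A) :
    (fun k => (Fin.snoc a b : Fin (m + 1) → A)
      ((Fin.snoc (fun k => (r k).castSucc) (Fin.last m) : Fin (n + 1) → Fin (m + 1)) k))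
      = Fin.snoc (fun k => a (r k)) b := by
  ext k
  refine Fin.lastCases ?_ (fun k => ?_) k <;> simp

lemma Formula.interp_rename {A : Type} [CStarAlgebra A] {n : ℕ} (φ : Formula n) :
    ∀ {m : ℕ} (r : Fin n → Fin m) (a : Fin m → A),
      (φ.rename r).interp A a = φ.interp A fun k => a (r k) := by
  induction φ with
  | atom t => intro m r a; simp only [Formula.rename, Formula.interp, CTerm.eval_rename]
  | comb u hu phis ih => intro m r a; simp only [Formula.rename, Formula.interp, ih]
  | sup φ ih =>
    intro m r a
    simp only [Formula.rename, Formula.interp, ih]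
    exact congrArg iSup (funext fun b => by rw [snoc_comp_snoc])
  | inf φ ih =>
    intro m r a
    simp only [Formula.rename, Formula.interp, ih]
    exact congrArg iInf (funext fun b => by rw [snoc_comp_snoc])

/-- The positive part of a formula. -/
def Formula.pos {n : ℕ} (φ : Formula n) : Formula n :=
  .comb (k := 1) (fun x => max (x 0) 0) (by fun_prop) fun _ => φ

lemma Formula.interp_pos {A : Type} [CStarAlgebra A] {n : ℕ} (φ : Formula n) (a : Fin n → A) :
    φ.pos.interp A a = max (φ.interp A a) 0 := by
  simp only [Formula.pos, Formula.interp]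

/-- Infimum over the last `m` variables. -/
def Formula.infs : ∀ (m : ℕ) {n : ℕ}, Formula (n + m) → Formula n
  | 0, _, φ => φ
  | m + 1, _, φ => Formula.infs m (.inf φ)

lemma Formula.interp_infs_lt {A : Type} [CStarAlgebra A] {ε : ℝ} {n : ℕ} (a : Fin n → A) :
    ∀ (m : ℕ) (φ : Formula (n + m)), (∀ a, 0 ≤ φ.interp A a) →
      ((φ.infs m).interp A a < ε ↔
        ∃ y : Fin m → Ball A, φ.interp A (Fin.append a fun k => (y k).1) < ε)
  | 0, φ, _ => by
    have e : ∀ y : Fin 0 → Ball A, (Fin.append a fun k => (y k).1) = a := fun y => by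
      rw [Fin.append_right_nil _ _ rfl]; rfl
    simp [Formula.infs, e]
  | m + 1, φ, hφ => by
    have hinf : ∀ a, 0 ≤ (Formula.inf φ).interp A a := fun a => by
      simp only [Formula.interp]
      exact Real.iInf_nonneg fun _ => hφ _
    have key : ∀ c : Fin (n + m) → A, (Formula.inf φ).interp A c < ε ↔
        ∃ b : Ball A, φ.interp A (Fin.snoc c b.1) < ε := fun c => by
      simp only [Formula.interp]
      exact ciInf_lt_iff ⟨0, by rintro _ ⟨b, rfl⟩; exact hφ _⟩
    have e : ∀ (y : Fin m → Ball A) (b : Ball A),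
        (Fin.snoc (Fin.append a fun k => (y k).1) b.1 : Fin (n + m + 1) → A)
          = Fin.append a fun k => ((Fin.snoc y b : Fin (m + 1) → Ball A) k).1 := fun y b => by
      rw [← Fin.append_snoc]
      congr 1
      ext k
      refine Fin.lastCases ?_ (fun k => ?_) k <;> simp
    rw [Formula.infs, Formula.interp_infs_lt a m _ hinf]
    simp only [key]
    constructor
    · rintro ⟨y, b, h⟩
      exact ⟨Fin.snoc y b, by rwa [← e]⟩
    · rintro ⟨y, h⟩
      refine ⟨Fin.init y, y (Fin.last m), ?_⟩
      rwa [e, Fin.snoc_init_self]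

/-- A real-valued predicate on families of elements of the unit ball indexed by `X`, given
uniformly in all C*-algebras. -/
abbrev Pred (X : Type) : Type 1 := ∀ (A : Type) [CStarAlgebra A], (X → Ball A) → ℝ

/-- A predicate is definable if it is given by a formula in finitely many of the variables. -/
def IsDef {X : Type} (D : Pred X) : Prop :=
  ∃ (n : ℕ) (φ : Formula n) (v : Fin n → X),
    ∀ (A : Type) [CStarAlgebra A] (a : X → Ball A), D A a = φ.interp A fun k => (a (v k)).1

namespace IsDef

variable {X Y Z : Type}

lemma norm_term {n : ℕ} (t : CTerm n) (v : Fin n → X) :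
    IsDef fun A _ (a : X → Ball A) => ‖t.eval fun k => (a (v k)).1‖ :=
  ⟨n, .atom t, v, fun A _ a => by simp only [Formula.interp]⟩

lemma const (c : ℝ) : IsDef fun A _ (_ : X → Ball A) => c :=
  ⟨0, .comb (k := 0) (fun _ => c) continuous_const finZeroElim, finZeroElim,
    fun A _ a => by simp only [Formula.interp]⟩

lemma comp {D : Pred X} (hD : IsDef D) {u : ℝ → ℝ} (hu : Continuous u) :
    IsDef fun A _ (a : X → Ball A) => u (D A a) := by
  obtain ⟨n, φ, v, h⟩ := hD
  exact ⟨n, .comb (k := 1) (fun x => u (x 0)) (by fun_prop) fun _ => φ, v,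
    fun A _ a => by simp only [Formula.interp, h]⟩

lemma add {D E : Pred X} (hD : IsDef D) (hE : IsDef E) :
    IsDef fun A _ (a : X → Ball A) => D A a + E A a := by
  obtain ⟨n, φ, v, h⟩ := hD
  obtain ⟨m, ψ, w, h'⟩ := hE
  refine ⟨n + m, .comb (k := 2) (fun x => x 0 + x 1) (by fun_prop)
    ![φ.rename (Fin.castAdd m), ψ.rename (Fin.natAdd n)], Fin.append v w, fun A _ a => ?_⟩
  simp [Formula.interp, h, h', Formula.interp_rename]

lemma sum {ι : Type} (T : Finset ι) {D : ι → Pred X} (hD : ∀ τ, IsDef (D τ)) :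
    IsDef fun A _ (a : X → Ball A) => ∑ τ ∈ T, D τ A a := by
  classical
  induction T using Finset.induction_on with
  | empty => simpa using const 0
  | insert τ T hτ ih =>
    simp only [Finset.sum_insert hτ]
    exact (hD τ).add ih

/-- For a tuple `v`, an index `pick v z` with `v (pick v z) = z`. -/
def _root_.pick {n : ℕ} (v : Fin n → Z) (z : Z) (h : ∃ k, v k = z) : Fin n := Classical.choose h

lemma _root_.pick_spec {n : ℕ} (v : Fin n → Z) (z : Z) (h : ∃ k, v k = z) : v (pick v z h) = z :=
  Classical.choose_spec h

/-- If a nonnegative definable predicate takes small values in `B`, it does so in every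
C*-algebra elementarily equivalent to `B`. -/
lemma exists_lt_of_elemEquiv {A B : Type} [CStarAlgebra A] [CStarAlgebra B]
    (hAB : ElemEquiv A B) {D : Pred X} (hD : IsDef D) {ε : ℝ} (hε : 0 < ε)
    (h : ∃ b, D B b < ε) : ∃ a, D A a < ε := by
  classical
  obtain ⟨n, φ, v, hφ⟩ := hD
  obtain ⟨b, hb⟩ := h
  -- Positions carrying the same variable are identified before quantifying.
  let r : Fin n → Fin (0 + n) := fun k => Fin.natAdd 0 (pick v (v k) ⟨k, rfl⟩)
  let ψ : Formula (0 + n) := (φ.rename r).pos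
  have hψ : ∀ (M : Type) [CStarAlgebra M] (c : Fin (0 + n) → M), 0 ≤ ψ.interp M c :=
    fun M _ c => by simp only [ψ, Formula.interp_pos]; exact le_max_right _ _
  have hB : (ψ.infs n).interp B finZeroElim < ε := by
    rw [Formula.interp_infs_lt _ _ _ (hψ B)]
    refine ⟨fun k => b (v k), ?_⟩
    simp only [ψ, Formula.interp_pos, Formula.interp_rename, r, Fin.append_right, pick_spec]
    rw [← hφ]
    exact max_lt hb hε
  rw [← hAB, Formula.interp_infs_lt _ _ _ (hψ A)] at hB
  obtain ⟨y, hy⟩ := hB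
  refine ⟨fun x => if h : ∃ k, v k = x then y (pick v x h) else Ball.zero A, ?_⟩
  simp only [ψ, Formula.interp_pos, Formula.interp_rename, r, Fin.append_right] at hy
  rw [hφ]
  refine lt_of_le_of_lt (le_of_eq ?_) ((le_max_left _ _).trans_lt hy)
  congr 1
  ext k
  rw [dif_pos ⟨k, rfl⟩]

/-- Definable predicates are closed under infima over a family of variables. -/
lemma exists_inf [Inhabited X] {D : Pred (Y ⊕ X)} (hD : IsDef D) :
    ∃ E : Pred X, IsDef E ∧ ∀ (A : Type) [CStarAlgebra A] (a : X → Ball A) (ε : ℝ), 0 < ε →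
      (E A a < ε ↔ ∃ y : Y → Ball A, D A (Sum.elim y a) < ε) := by
  classical
  obtain ⟨n, φ, v, hφ⟩ := hD
  -- The first `n` positions carry the parameters, the last `n` the quantified variables.
  let rep : Fin n → Fin n := fun k => pick v (v k) ⟨k, rfl⟩
  let r : Fin n → Fin (n + n) := fun k =>
    Sum.elim (fun _ => Fin.natAdd n (rep k)) (fun _ => Fin.castAdd n k) (v k)
  let w : Fin n → X := fun k => Sum.elim (fun _ => default) id (v k)
  let ψ : Formula (n + n) := (φ.rename r).pos
  have hψ : ∀ (M : Type) [CStarAlgebra M] (c : Fin (n + n) → M), 0 ≤ ψ.interp M c :=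
    fun M _ c => by simp only [ψ, Formula.interp_pos]; exact le_max_right _ _
  refine ⟨fun A _ a => (ψ.infs n).interp A fun k => (a (w k)).1, ⟨n, _, w, fun A _ a => rfl⟩,
    fun A _ a ε hε => ?_⟩
  rw [Formula.interp_infs_lt _ _ _ (hψ A)]
  simp only [ψ, Formula.interp_pos, Formula.interp_rename, max_lt_iff, hε, and_true, hφ]
  have key : ∀ (y : Y → Ball A) (y' : Fin n → Ball A),
      (∀ k z, v k = .inl z → y' (pick v (v k) ⟨k, rfl⟩) = y z) →
      (fun k => Fin.append (fun k => (a (w k)).1) (fun k => (y' k).1) (r k))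
        = fun k => (Sum.elim y a (v k)).1 := by
    intro y y' hy
    ext k
    rcases hk : v k with z | x
    · have : r k = Fin.natAdd n (rep k) := by
        change Sum.elim (fun _ => Fin.natAdd n (rep k)) _ (v k) = _
        rw [hk]; rfl
      rw [this, Fin.append_right, hy k z hk]; rfl
    · have h1 : r k = Fin.castAdd n k := by
        change Sum.elim (fun _ => Fin.natAdd n (rep k)) _ (v k) = _
        rw [hk]; rfl
      have h2 : w k = x := by
        change Sum.elim _ _ (v k) = _
        rw [hk]; rfl
      rw [h1, Fin.append_left, h2]; rfl
  constructor
  · rintro ⟨y', h⟩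
    refine ⟨fun z => if h : ∃ k, v k = .inl z then y' (pick v (.inl z) h) else Ball.zero A, ?_⟩
    rwa [← key _ y']
    intro k z hk
    rw [dif_pos ⟨k, hk⟩]
    congr 1
    congr 1
  · rintro ⟨y, h⟩
    refine ⟨fun k => Sum.elim y (fun _ => Ball.zero A) (v k), ?_⟩
    rwa [key y]
    intro k z hk
    change Sum.elim y (fun _ => Ball.zero A) (v (pick v (v k) ⟨k, rfl⟩)) = y z
    rw [pick_spec v (v k), hk]; rfl

end IsDef

/-- There is an ultrafilter on the maps from the unit ball of `B` to the unit ball of `A` along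
which every definable predicate of the image converges to its value in `B`: the elementary
embedding of `B` into an ultrapower of `A`. -/
lemma exists_elementary {A B : Type} [CStarAlgebra A] [CStarAlgebra B] (hAB : ElemEquiv A B) :
    ∃ V : Ultrafilter (Ball B → Ball A), ∀ D : Pred (Ball B), IsDef D →
      Tendsto (fun s => D A s) V (𝓝 (D B id)) := by
  let ι := {D : Pred (Ball B) // IsDef D ∧ D B id = 0 ∧ ∀ s, 0 ≤ D A s}
  let S : ι → Set (Ball B → Ball A) := fun D => {s | D.1 A s < 1}
  let F : Filter (Ball B → Ball A) := ⨅ D : ι, 𝓟 (S D)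
  have : Nonempty ι := ⟨⟨fun _ _ _ => 0, IsDef.const 0, rfl, fun _ => le_rfl⟩⟩
  have hF : F.NeBot := by
    refine iInf_neBot_of_directed' ?_ ?_
    · rintro ⟨D, hD, hD0, hDn⟩ ⟨E, hE, hE0, hEn⟩
      refine ⟨⟨_, hD.add hE, by rw [hD0, hE0, add_zero], fun s => add_nonneg (hDn s) (hEn s)⟩,
        ?_, ?_⟩
      · refine principal_mono.2 fun s (hs : D A s + E A s < 1) => ?_
        change D A s < 1
        linarith [hEn s]
      · refine principal_mono.2 fun s (hs : D A s + E A s < 1) => ?_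
        change E A s < 1
        linarith [hDn s]
    · rintro ⟨D, hD, hD0, hDn⟩
      rw [principal_neBot_iff]
      exact hD.exists_lt_of_elemEquiv hAB one_pos ⟨id, by rw [hD0]; exact one_pos⟩
  refine ⟨Ultrafilter.of F, fun D hD => ?_⟩
  refine Tendsto.mono_left ?_ (Ultrafilter.of_le F)
  rw [Metric.tendsto_nhds]
  intro ε hε
  let D' : ι := ⟨fun M _ a => |D M a - D B id| / ε,
    hD.comp (u := fun x => |x - D B id| / ε) (by fun_prop), by simp, fun s => by positivity⟩
  have : S D' ∈ F := mem_iInf_of_mem D' (mem_principal_self _)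
  filter_upwards [this] with s hs
  have hs : |D A s - D B id| / ε < 1 := hs
  rwa [div_lt_one hε] at hs

/-! ### The maximal tensor norm -/

section MaxNorm

variable {A B : Type} [CStarAlgebra A] [CStarAlgebra B] {n : ℕ}

lemma CommutingRepPair.hom_sum (p : CommutingRepPair A B) (f : Fin n → A) (g : Fin n → B) :
    p.hom (∑ k, f k ⊗ₜ[ℂ] g k) = ∑ k, p.fst (f k) * p.snd (g k) := by
  rw [map_sum]
  exact Finset.sum_congr rfl fun k _ => Algebra.TensorProduct.lift_tmul _ _ _ _ _

lemma CommutingRepPair.norm_hom_sum_le (p : CommutingRepPair A B) (f : Fin n → A)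
    (g : Fin n → B) : ‖p.hom (∑ k, f k ⊗ₜ[ℂ] g k)‖ ≤ ∑ k, ‖f k‖ * ‖g k‖ := by
  rw [p.hom_sum]
  refine norm_sum_le_of_le _ fun k _ => (norm_mul_le _ _).trans ?_
  gcongr <;> exact NonUnitalStarAlgHom.norm_apply_le _ _

lemma CommutingRepPair.norm_hom_le_maxNorm (p : CommutingRepPair A B) (f : Fin n → A)
    (g : Fin n → B) :
    ‖p.hom (∑ k, f k ⊗ₜ[ℂ] g k)‖ ≤ maxNorm A B (∑ k, f k ⊗ₜ[ℂ] g k) :=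
  le_csSup ⟨_, by rintro _ ⟨p, rfl⟩; exact p.norm_hom_sum_le f g⟩ ⟨p, rfl⟩

/-- The pair of representations on the zero algebra. -/
instance : Nonempty (CommutingRepPair A B) :=
  ⟨{ carrier := C(Empty, ℂ)
     fst := { toFun := fun _ => 0
              map_one' := Subsingleton.elim _ _
              map_mul' := fun _ _ => Subsingleton.elim _ _
              map_zero' := rfl
              map_add' := fun _ _ => Subsingleton.elim _ _
              commutes' := fun _ => Subsingleton.elim _ _
              map_star' := fun _ => Subsingleton.elim _ _ }
     snd := { toFun := fun _ => 0
              map_one' := Subsingleton.elim _ _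
              map_mul' := fun _ _ => Subsingleton.elim _ _
              map_zero' := rfl
              map_add' := fun _ _ => Subsingleton.elim _ _
              commutes' := fun _ => Subsingleton.elim _ _
              map_star' := fun _ => Subsingleton.elim _ _ }
     commutes := fun _ _ => Subsingleton.elim _ _ }⟩

lemma maxNorm_le {x : TensorProduct ℂ A B} {r : ℝ}
    (h : ∀ p : CommutingRepPair A B, ‖p.hom x‖ ≤ r) : maxNorm A B x ≤ r := by
  obtain ⟨p⟩ : Nonempty (CommutingRepPair A B) := inferInstance
  exact csSup_le ⟨_, p, rfl⟩ (by rintro _ ⟨p, rfl⟩; exact h p)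

lemma exists_lt_norm_hom (x : TensorProduct ℂ A B) {r : ℝ} (h : r < maxNorm A B x) :
    ∃ p : CommutingRepPair A B, r < ‖p.hom x‖ := by
  obtain ⟨p⟩ : Nonempty (CommutingRepPair A B) := inferInstance
  obtain ⟨_, ⟨p, rfl⟩, hp⟩ := exists_lt_of_lt_csSup
    (s := {r : ℝ | ∃ p : CommutingRepPair A B, r = ‖p.hom x‖}) ⟨_, p, rfl⟩ h
  exact ⟨p, hp⟩

lemma maxNorm_nonneg (f : Fin n → A) (g : Fin n → B) :
    0 ≤ maxNorm A B (∑ k, f k ⊗ₜ[ℂ] g k) := by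
  obtain ⟨p⟩ : Nonempty (CommutingRepPair A B) := inferInstance
  exact (norm_nonneg _).trans (p.norm_hom_le_maxNorm f g)

lemma maxNorm_sum_le (f : Fin n → A) (g : Fin n → B) :
    maxNorm A B (∑ k, f k ⊗ₜ[ℂ] g k) ≤ ∑ k, ‖f k‖ * ‖g k‖ :=
  maxNorm_le fun p => p.norm_hom_sum_le f g

/-- *-homomorphisms are contractive for the maximal tensor norms. -/
lemma maxNorm_map_le {M : Type} [CStarAlgebra M] (φ : A →⋆ₐ[ℂ] M) (f g : Fin n → A) :
    maxNorm M M (∑ k, φ (f k) ⊗ₜ[ℂ] φ (g k)) ≤ maxNorm A A (∑ k, f k ⊗ₜ[ℂ] g k) := by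
  refine maxNorm_le fun p => ?_
  let p' : CommutingRepPair A A :=
    { carrier := p.carrier
      fst := p.fst.comp φ
      snd := p.snd.comp φ
      commutes := fun a b => p.commutes (φ a) (φ b) }
  have := p'.norm_hom_le_maxNorm f g
  rw [p'.hom_sum] at this
  rw [p.hom_sum]
  exact this

end MaxNorm

section Lower

variable {I : Type} {U : Ultrafilter I} {B : Type} [CStarAlgebra B] {P : Type} [CStarAlgebra P]
  {π : (I → B) → P}

/-- A family of representations `φ i` of `B` induces a representation of the ultrapower of
`B` on the ultraproduct of the target algebras. -/
lemma exists_hom_ultraproduct (h : IsCStarUltraproduct U (fun _ => B) P π) {C : I → Type}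
    [∀ i, CStarAlgebra (C i)] (φ : ∀ i, B →⋆ₐ[ℂ] C i) {R : Type} [CStarAlgebra R]
    {η : (∀ i, C i) → R} (hη : IsCStarUltraproduct U C R η) :
    ∃ Φ : P →⋆ₐ[ℂ] R, ∀ f : I → B, Bdd f → Φ (π f) = η fun i => φ i (f i) := by
  choose r hr hrπ using fun p : P => h.surj (dir p)
  have hrb : ∀ p, Bdd (r p) := fun p => ⟨_, hr p⟩
  refine ⟨homOfRel (fun p => η fun i => φ i (r p i)) fun n t v ht => ?_, fun f hf => ?_⟩
  · rw [← norm_eq_zero]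
    have h1 := h.tendsto_eval t fun k => hrb (v k)
    have h2 := hη.tendsto_eval t fun k => (hrb (v k)).map φ
    simp only [hrπ, ht, norm_zero] at h1
    refine le_antisymm (le_of_tendsto_of_tendsto' h2 h1 fun i => ?_) (norm_nonneg _)
    rw [CTerm.eval_map]
    exact NonUnitalStarAlgHom.norm_apply_le _ _
  · change (‖π f‖ : ℂ) • η _ = _
    rw [← hη.map_smul _ _ ((hrb (π f)).map φ)]
    have hb := (hrb (π f)).smul (‖π f‖ : ℂ)
    refine hη.eq_of_tendsto (((hrb (π f)).map φ).smul _) (hf.map φ) ?_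
    have h1 := h.tendsto_of_eq hb hf (by rw [h.map_smul _ _ (hrb _), hrπ, norm_smul_dir])
    refine squeeze_zero (fun _ => norm_nonneg _) (fun i => ?_) h1
    have : (((‖π f‖ : ℂ) • fun i => φ i (r (π f) i)) : ∀ i, C i) i - φ i (f i)
        = φ i (((‖π f‖ : ℂ) • r (π f)) i - f i) := by
      simp only [Pi.smul_apply, map_sub, map_smul]
    rw [this]
    exact NonUnitalStarAlgHom.norm_apply_le _ _

/-- The limit of the maximal norms of representatives is at most the maximal norm in the
ultrapower, because the ultraproduct of almost norming representations is a representation. -/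
lemma limit_le_maxNorm (h : IsCStarUltraproduct U (fun _ => B) P π) {n : ℕ}
    (f g : Fin n → I → B) (hf : ∀ k, Bdd (f k)) (hg : ∀ k, Bdd (g k)) {l : ℝ}
    (hl : Tendsto (fun i => maxNorm B B (∑ k, f k i ⊗ₜ[ℂ] g k i)) U (𝓝 l)) :
    l ≤ maxNorm P P (∑ k, π (f k) ⊗ₜ[ℂ] π (g k)) := by
  refine le_of_forall_pos_le_add fun ε hε => ?_
  choose p hp using fun i => exists_lt_norm_hom (∑ k, f k i ⊗ₜ[ℂ] g k i) (sub_lt_self _ hε)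
  obtain ⟨R, _, η, hη⟩ := exists_ultraproduct U fun i => (p i).carrier
  obtain ⟨Φ, hΦ⟩ := exists_hom_ultraproduct h (fun i => (p i).fst) hη
  obtain ⟨Ψ, hΨ⟩ := exists_hom_ultraproduct h (fun i => (p i).snd) hη
  let q : CommutingRepPair P P :=
    { carrier := R
      fst := Φ
      snd := Ψ
      commutes := fun a b => by
        obtain ⟨a, ha, rfl⟩ := h.surj a
        obtain ⟨b, hb, rfl⟩ := h.surj b
        have ha : Bdd a := ⟨_, ha⟩
        have hb : Bdd b := ⟨_, hb⟩
        rw [hΦ a ha, hΨ b hb]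
        exact hη.commute (ha.map _) (hb.map _) fun i => (p i).commutes _ _ }
  have hF : ∀ k, Bdd fun i => (p i).fst (f k i) := fun k => (hf k).map _
  have hG : ∀ k, Bdd fun i => (p i).snd (g k i) := fun k => (hg k).map _
  have e : q.hom (∑ k, π (f k) ⊗ₜ[ℂ] π (g k))
      = η fun i => (p i).hom (∑ k, f k i ⊗ₜ[ℂ] g k i) := by
    rw [q.hom_sum]
    simp only [CommutingRepPair.hom_sum]
    rw [hη.map_sum_mul Finset.univ hF hG]
    exact Finset.sum_congr rfl fun k _ => congrArg₂ _ (hΦ _ (hf k)) (hΨ _ (hg k))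
  have hb : Bdd fun i => (p i).hom (∑ k, f k i ⊗ₜ[ℂ] g k i) := by
    simp only [CommutingRepPair.hom_sum]
    have := Bdd.sum Finset.univ fun k => (hF k).mul (hG k)
    convert this using 1
    ext i
    simp
  have ht := hη.norm_eq _ hb
  rw [← e] at ht
  have := le_of_tendsto_of_tendsto' hl (ht.add_const ε) fun i => by linarith [hp i]
  linarith [q.norm_hom_le_maxNorm (fun k => π (f k)) fun k => π (g k)]

end Lower

/-! ### Iterated ultrapowers and approximate retractions -/

section Upper

/-- The iterated ultrafilter: a set is large if, for `U`-most `i`, its section over `i` is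
`V`-large. -/
def iter {I J : Type} (U : Ultrafilter I) (V : Ultrafilter J) : Ultrafilter (I × J) :=
  U.bind fun i => V.map (Prod.mk i)

lemma eventually_iter {I J : Type} {U : Ultrafilter I} {V : Ultrafilter J} {p : I × J → Prop} :
    (∀ᶠ x in (iter U V : Filter (I × J)), p x) ↔ ∀ᶠ i in (U : Filter I), ∀ᶠ j in (V : Filter J),
      p (i, j) :=
  Filter.eventually_bind

variable {I : Type} {U : Ultrafilter I} {A B : Type} [CStarAlgebra A] [CStarAlgebra B]
  {V : Ultrafilter (Ball B → Ball A)} {P : Type} [CStarAlgebra P] {π : (I → B) → P}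
  {Q : Type} [CStarAlgebra Q] {ρ : (I × (Ball B → Ball A) → A) → Q}

/-- The image in the iterated ultrapower `Q` of `A` of the element of the ultrapower of `B`
represented by the family `r`, under the ultrapower of the elementary embedding of `B`. -/
def push (ρ : (I × (Ball B → Ball A) → A) → Q) (r : I → Ball B) : Q :=
  ρ fun x => (x.2 (r x.1)).1

/-- A *-polynomial condition with variables from `Q ⊕ P`. -/
abbrev Eqn (Q P : Type) : Type := Σ n : ℕ, CTerm n × (Fin n → Q ⊕ P)

/-- The condition `τ` is an equation valid in `Q` for the normalized elements of `Q` and the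
images of the normalized elements of `P`. -/
def Eqn.Holds (ρ : (I × (Ball B → Ball A) → A) → Q) (lift : P → I → Ball B) (τ : Eqn Q P) :
    Prop :=
  τ.2.1.eval (fun k => Sum.elim dir (fun p => push ρ (lift p)) (τ.2.2 k)) = 0

/-- The size of the defect of `τ` in `P`, the elements of `Q` being interpreted by `σ`. -/
def Eqn.defect (σ : Q → Ball P) (τ : Eqn Q P) : ℝ :=
  ‖τ.2.1.eval fun k => Sum.elim (fun q => (σ q).1) dir (τ.2.2 k)‖

/-- Finitely many equations valid in `Q` over `P` can be approximately solved in `P`: the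
ultrapower of `B` is existentially closed in the iterated ultrapower of `A`. -/
lemma exists_approx (hV : ∀ D : Pred (Ball B), IsDef D → Tendsto (fun s => D A s) V (𝓝 (D B id)))
    (hπ : IsCStarUltraproduct U (fun _ => B) P π)
    (hρ : IsCStarUltraproduct (iter U V) (fun _ => A) Q ρ)
    {lift : P → I → Ball B} (hlift : ∀ p, π (fun i => (lift p i).1) = dir p)
    (T : Finset (Eqn Q P)) (hT : ∀ τ ∈ T, τ.Holds ρ lift) {ε : ℝ} (hε : 0 < ε) :
    ∃ σ : Q → Ball P, ∀ τ ∈ T, τ.defect σ < ε := by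
  classical
  choose e he heρ using fun q : Q => hρ.surj (dir q)
  let e' : Q → I × (Ball B → Ball A) → Ball A := fun q x =>
    ⟨e q x, (he q x).trans (norm_dir_le q)⟩
  let D : I → Pred (Q ⊕ Ball B) := fun i M _ a =>
    ∑ τ ∈ T, ‖τ.2.1.eval fun k => (a (Sum.map id (fun p => lift p i) (τ.2.2 k))).1‖
  have hD : ∀ i, IsDef (D i) := fun i => IsDef.sum T fun τ => IsDef.norm_term _ _
  let _ : Inhabited (Ball B) := ⟨Ball.zero B⟩
  choose E hE hEi using fun i => (hD i).exists_inf
  -- The representatives of the elements of `Q` witness that the infimum is small in `A`.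
  have h1 : Tendsto (fun x : I × (Ball B → Ball A) =>
      D x.1 A (Sum.elim (fun q => e' q x) x.2)) (iter U V) (𝓝 0) := by
    rw [← Finset.sum_const_zero (s := T)]
    refine tendsto_finsetSum _ fun τ hτ => ?_
    have hb : ∀ k, Bdd fun x : I × (Ball B → Ball A) =>
        (Sum.elim (fun q => e' q x) (fun p => x.2 (lift p x.1)) (τ.2.2 k)).1 :=
      fun k => Bdd.of_le_one fun x =>
        (Sum.elim (fun q => e' q x) (fun p => x.2 (lift p x.1)) (τ.2.2 k)).2
    have := hρ.tendsto_eval τ.2.1 hb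
    have h0 : τ.2.1.eval (fun k => ρ fun x : I × (Ball B → Ball A) =>
        (Sum.elim (fun q => e' q x) (fun p => x.2 (lift p x.1)) (τ.2.2 k)).1) = 0 := by
      rw [← hT τ hτ]
      congr 1
      ext k
      rcases τ.2.2 k with q | p
      · exact heρ q
      · rfl
    rw [h0, norm_zero] at this
    refine this.congr fun x => ?_
    congr 2
    ext k
    rcases τ.2.2 k with q | p <;> rfl
  have h2 : ∀ᶠ i in (U : Filter I), ∀ᶠ s in (V : Filter (Ball B → Ball A)),
      E i A s < ε / 3 := by
    refine eventually_iter (p := fun x => E x.1 A x.2 < ε / 3).1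
      ((h1.eventually_lt_const (by positivity : 0 < ε / 3)).mono ?_)
    intro x hx
    exact (hEi x.1 A x.2 _ (by positivity)).2 ⟨_, hx⟩
  -- By elementarity it is small in `B`.
  have h3 : ∀ᶠ i in (U : Filter I), ∃ y : Q → Ball B, D i B (Sum.elim y id) < ε / 2 := by
    filter_upwards [h2] with i hi
    refine (hEi i B id _ (by positivity)).1 ?_
    have := le_of_tendsto (hV (E i) (hE i)) (hi.mono fun _ h => h.le)
    linarith
  have h4 : ∀ i, ∃ y : Q → Ball B, (∃ y, D i B (Sum.elim y id) < ε / 2) →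
      D i B (Sum.elim y id) < ε / 2 := fun i => by
    by_cases h : ∃ y, D i B (Sum.elim y id) < ε / 2
    · obtain ⟨y, hy⟩ := h
      exact ⟨y, fun _ => hy⟩
    · exact ⟨fun _ => Ball.zero B, fun h' => absurd h' h⟩
  choose y hy using h4
  refine ⟨fun q => ⟨π fun i => (y i q).1, hπ.norm_le fun i => (y i q).2⟩, fun τ hτ => ?_⟩
  have hb : ∀ k, Bdd fun i => (Sum.elim (y i) (fun p => lift p i) (τ.2.2 k)).1 :=
    fun k => Bdd.of_le_one fun i => (Sum.elim (y i) (fun p => lift p i) (τ.2.2 k)).2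
  have ht := hπ.tendsto_eval τ.2.1 hb
  have e1 : (fun k => π fun i => (Sum.elim (y i) (fun p => lift p i) (τ.2.2 k)).1)
      = fun k => Sum.elim (fun q => π fun i => (y i q).1) dir (τ.2.2 k) := by
    ext k
    rcases τ.2.2 k with q | p
    · rfl
    · exact hlift p
  rw [e1] at ht
  refine lt_of_le_of_lt (le_of_tendsto ht ?_) (half_lt_self hε)
  filter_upwards [h3] with i hi
  refine le_trans ?_ (hy i hi).le
  have e2 : (fun k => (Sum.elim (y i) (fun p => lift p i) (τ.2.2 k)).1)
      = fun k => ((Sum.elim (y i) id : Q ⊕ Ball B → Ball B)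
        (Sum.map id (fun p => lift p i) (τ.2.2 k))).1 := by
    ext k
    rcases τ.2.2 k with q | p <;> rfl
  rw [e2]
  exact Finset.single_le_sum (f := fun τ : Eqn Q P => ‖τ.2.1.eval fun k =>
    ((Sum.elim (y i) id : Q ⊕ Ball B → Ball B) (Sum.map id (fun p => lift p i) (τ.2.2 k))).1‖)
    (fun _ _ => norm_nonneg _) hτ

/-- Approximate retractions `σ w` of `Q` onto `P` extend a representation of `P` to one of `Q`
on an ultrapower of the target algebra. -/
lemma exists_extension {lift : P → I → Ball B} {W : Type} {𝒲 : Ultrafilter W}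
    {σ : W → Q → Ball P}
    (hσ : ∀ τ : Eqn Q P, τ.Holds ρ lift → Tendsto (fun w => τ.defect (σ w)) 𝒲 (𝓝 0))
    {C R : Type} [CStarAlgebra C] [CStarAlgebra R] {η : (W → C) → R}
    (hη : IsCStarUltraproduct 𝒲 (fun _ => C) R η) (φ : P →⋆ₐ[ℂ] C) :
    ∃ Φ : Q →⋆ₐ[ℂ] R, (∀ q, Φ q = (‖q‖ : ℂ) • η fun w => φ (σ w q).1) ∧
      ∀ q x, q = (‖x‖ : ℂ) • push ρ (lift x) → Φ q = η fun _ => φ x := by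
  have hb : ∀ q, Bdd fun w => φ (σ w q).1 := fun q =>
    Bdd.map (f := fun w => (σ w q).1) (Bdd.of_le_one fun w => (σ w q).2) fun _ => φ
  refine ⟨homOfRel (fun q => η fun w => φ (σ w q).1) fun n t v ht => ?_, fun q => rfl,
    fun q x hq => ?_⟩
  · rw [← norm_eq_zero]
    have h1 := hσ ⟨n, t, fun k => .inl (v k)⟩ ht
    have h2 := hη.tendsto_eval t fun k => hb (v k)
    refine le_antisymm (le_of_tendsto_of_tendsto' h2 h1 fun w => ?_) (norm_nonneg _)
    rw [CTerm.eval_map]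
    exact NonUnitalStarAlgHom.norm_apply_le _ _
  · change (‖q‖ : ℂ) • η _ = _
    rw [← hη.map_smul _ _ (hb q)]
    refine hη.eq_of_tendsto ((hb q).smul _) ⟨_, fun _ => le_rfl⟩ ?_
    have h1 := hσ ⟨2, .add (.smul ‖q‖ (.var 0)) (.smul (-1) (.smul ‖x‖ (.var 1))),
      ![.inl q, .inr x]⟩ (by
        simp only [Eqn.Holds, CTerm.eval, Matrix.cons_val, Sum.elim_inl, Sum.elim_inr,
          norm_smul_dir, neg_one_smul, add_neg_eq_zero]
        exact hq)
    simp only [Eqn.defect, CTerm.eval, Matrix.cons_val, Sum.elim_inl, Sum.elim_inr,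
      norm_smul_dir, neg_one_smul, ← sub_eq_add_neg] at h1
    refine squeeze_zero (fun _ => norm_nonneg _) (fun w => ?_) h1
    have : (((‖q‖ : ℂ) • fun w => φ (σ w q).1) : W → C) w - φ x
        = φ ((‖q‖ : ℂ) • (σ w q).1 - x) := by
      simp only [Pi.smul_apply, _root_.map_sub, map_smul]
    rw [this]
    exact NonUnitalStarAlgHom.norm_apply_le _ _

/-- The maximal norm on the ultrapower `P` of `B` is at most that on the iterated ultrapower `Q`
of `A`: commuting representations of `P` extend to commuting representations of `Q`. -/
lemma maxNorm_le_of_push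
    (hV : ∀ D : Pred (Ball B), IsDef D → Tendsto (fun s => D A s) V (𝓝 (D B id)))
    (hπ : IsCStarUltraproduct U (fun _ => B) P π)
    (hρ : IsCStarUltraproduct (iter U V) (fun _ => A) Q ρ)
    {lift : P → I → Ball B} (hlift : ∀ p, π (fun i => (lift p i).1) = dir p)
    {n : ℕ} {x x' : Fin n → P} {q q' : Fin n → Q}
    (hq : ∀ k, q k = (‖x k‖ : ℂ) • push ρ (lift (x k)))
    (hq' : ∀ k, q' k = (‖x' k‖ : ℂ) • push ρ (lift (x' k))) :
    maxNorm P P (∑ k, x k ⊗ₜ[ℂ] x' k) ≤ maxNorm Q Q (∑ k, q k ⊗ₜ[ℂ] q' k) := by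
  classical
  refine maxNorm_le fun p => ?_
  let W := Finset {τ : Eqn Q P // τ.Holds ρ lift} × ℕ
  let 𝒲 : Ultrafilter W := Ultrafilter.of atTop
  have h𝒲 : (𝒲 : Filter W) ≤ atTop := Ultrafilter.of_le _
  have hex : ∀ w : W, ∃ σ : Q → Ball P, ∀ τ ∈ w.1, τ.1.defect σ < 1 / ((w.2 : ℝ) + 1) := by
    intro w
    obtain ⟨σ, hσ⟩ := exists_approx hV hπ hρ hlift (w.1.map (Embedding.subtype _))
      (by simp only [Finset.mem_map]; rintro _ ⟨τ, -, rfl⟩; exact τ.2)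
      (ε := 1 / ((w.2 : ℝ) + 1)) (by positivity)
    exact ⟨σ, fun τ hτ => hσ τ.1 (Finset.mem_map_of_mem (Embedding.subtype _) hτ)⟩
  choose σ hσ using hex
  have hσ0 : ∀ τ : Eqn Q P, τ.Holds ρ lift → Tendsto (fun w => τ.defect (σ w)) 𝒲 (𝓝 0) := by
    intro τ hτ
    have h1 : Tendsto (fun w : W => 1 / ((w.2 : ℝ) + 1)) atTop (𝓝 0) := by
      rw [← prod_atTop_atTop_eq]
      exact tendsto_one_div_add_atTop_nhds_zero_nat.comp tendsto_snd
    refine Tendsto.mono_left ?_ h𝒲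
    refine squeeze_zero' (Eventually.of_forall fun w => norm_nonneg _) ?_ h1
    filter_upwards [eventually_ge_atTop (({⟨τ, hτ⟩}, 0) : W)] with w hw
    exact (hσ w ⟨τ, hτ⟩ (hw.1 (Finset.mem_singleton_self _))).le
  obtain ⟨R, _, η, hη⟩ := exists_ultraproduct 𝒲 fun _ => p.carrier
  obtain ⟨Φ, hΦ, hΦx⟩ := exists_extension hσ0 hη p.fst
  obtain ⟨Ψ, hΨ, hΨx⟩ := exists_extension hσ0 hη p.snd
  have hb : ∀ (φ : P →⋆ₐ[ℂ] p.carrier) (q : Q), Bdd fun w => φ (σ w q).1 := fun φ q =>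
    Bdd.map (f := fun w => (σ w q).1) (Bdd.of_le_one fun w => (σ w q).2) fun _ => φ
  let p' : CommutingRepPair Q Q :=
    { carrier := R
      fst := Φ
      snd := Ψ
      commutes := fun a b => by
        rw [hΦ, hΨ]
        exact ((hη.commute (hb _ a) (hb _ b) fun w => p.commutes _ _).smul_left _).smul_right _ }
  refine le_trans (le_of_eq ?_) (p'.norm_hom_le_maxNorm q q')
  have e : p'.hom (∑ k, q k ⊗ₜ[ℂ] q' k) = η fun _ => p.hom (∑ k, x k ⊗ₜ[ℂ] x' k) := by
    rw [p'.hom_sum, p.hom_sum, hη.map_sum_mul Finset.univ (f := fun k _ => p.fst (x k))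
      (g := fun k _ => p.snd (x' k)) (fun k => ⟨_, fun _ => le_rfl⟩) fun k => ⟨_, fun _ => le_rfl⟩]
    exact Finset.sum_congr rfl fun k _ => congrArg₂ _ (hΦx _ _ (hq k)) (hΨx _ _ (hq' k))
  rw [e]
  exact tendsto_nhds_unique tendsto_const_nhds (hη.norm_eq _ ⟨_, fun _ => le_rfl⟩)

end Upper

/-! ### Transfer of property max-`U` -/

section Transfer

variable {A B : Type} [CStarAlgebra A] [CStarAlgebra B]

/-- The positively homogeneous extension to `B` of the restriction to the unit sphere of a map
between unit balls. -/
def stretch (s : Ball B → Ball A) (b : B) : A := (‖b‖ : ℂ) • (s ⟨dir b, norm_dir_le b⟩).1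

lemma norm_stretch_le (s : Ball B → Ball A) (b : B) : ‖stretch s b‖ ≤ ‖b‖ := by
  rw [stretch, norm_smul, Complex.norm_real, norm_norm]
  exact mul_le_of_le_one_right (norm_nonneg _) (s _).2

variable {V : Ultrafilter (Ball B → Ball A)}

/-- The elementary embedding of `B` into an ultrapower of `A`, as a *-homomorphism. -/
lemma exists_embedding
    (hV : ∀ D : Pred (Ball B), IsDef D → Tendsto (fun s => D A s) V (𝓝 (D B id)))
    {M : Type} [CStarAlgebra M] {μ : ((Ball B → Ball A) → A) → M}
    (hμ : IsCStarUltraproduct V (fun _ => A) M μ) :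
    ∃ Φ : B →⋆ₐ[ℂ] M, ∀ b, Φ b = μ fun s => stretch s b := by
  let d : B → Ball B := fun b => ⟨dir b, norm_dir_le b⟩
  have hb : ∀ b, Bdd fun s : Ball B → Ball A => (s (d b)).1 :=
    fun b => Bdd.of_le_one fun s => (s (d b)).2
  refine ⟨homOfRel (fun b => μ fun s => (s (d b)).1) fun n t v ht => ?_, fun b => ?_⟩
  · rw [← norm_eq_zero]
    have h1 := hμ.tendsto_eval t fun k => hb (v k)
    have h2 := hV _ (IsDef.norm_term t fun k => d (v k))
    rw [tendsto_nhds_unique h1 h2, norm_eq_zero]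
    exact ht
  · exact (hμ.map_smul _ _ (hb b)).symm

variable {I : Type} {U : Ultrafilter I} {P : Type} [CStarAlgebra P] {π : (I → B) → P}
  {Q : Type} [CStarAlgebra Q] {ρ : (I × (Ball B → Ball A) → A) → Q}

/-- The image in the iterated ultrapower of the class of a family `f` does not depend on its
representative, so it may be computed from `f` itself or from the chosen lift of its
normalization. -/
lemma stretch_eq_push
    (hV : ∀ D : Pred (Ball B), IsDef D → Tendsto (fun s => D A s) V (𝓝 (D B id)))
    (hπ : IsCStarUltraproduct U (fun _ => B) P π)
    (hρ : IsCStarUltraproduct (iter U V) (fun _ => A) Q ρ)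
    {f : I → B} (hf : Bdd f) {r : I → Ball B} (hr : π (fun i => (r i).1) = dir (π f)) :
    ρ (fun x => stretch x.2 (f x.1)) = (‖π f‖ : ℂ) • push ρ r := by
  have hrb : Bdd fun i => (r i).1 := Bdd.of_le_one fun i => (r i).2
  have hρb : Bdd fun x : I × (Ball B → Ball A) => (x.2 (r x.1)).1 :=
    Bdd.of_le_one fun x => (x.2 (r x.1)).2
  rw [push, ← hρ.map_smul _ _ hρb]
  obtain ⟨m, hm⟩ := id hf
  refine hρ.eq_of_tendsto ⟨m, fun x => (norm_stretch_le _ _).trans (hm _)⟩ (hρb.smul _) ?_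
  have h1 := hπ.tendsto_of_eq hf (hrb.smul (‖π f‖ : ℂ))
    (by rw [hπ.map_smul _ _ hrb, hr, norm_smul_dir])
  rw [Metric.tendsto_nhds]
  intro ε hε
  refine eventually_iter.2 ?_
  filter_upwards [h1.eventually_lt_const hε] with i hi
  have h2 := hV _ (IsDef.norm_term
    (.add (.smul ‖f i‖ (.var 0)) (.smul (-1) (.smul ‖π f‖ (.var 1))))
    ![⟨dir (f i), norm_dir_le (f i)⟩, r i])
  simp only [CTerm.eval, Matrix.cons_val, id, norm_smul_dir, neg_one_smul,
    ← sub_eq_add_neg] at h2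
  filter_upwards [h2.eventually_lt_const hi] with s hs
  rw [Real.dist_0_eq_abs, abs_norm]
  exact hs

/-- If `A` has property max-`U` for all ultrafilters, the maximal norm in an ultrapower of `B` is
at most the limit of the maximal norms of representatives. -/
lemma maxNorm_le_limit (hA : ∀ (I : Type) (U : Ultrafilter I), HasMaxU U A)
    (hAB : ElemEquiv A B) (hπ : IsCStarUltraproduct U (fun _ => B) P π) {n : ℕ}
    (f g : Fin n → I → B) (hf : ∀ k, Bdd (f k)) (hg : ∀ k, Bdd (g k)) {l : ℝ}
    (hl : Tendsto (fun i => maxNorm B B (∑ k, f k i ⊗ₜ[ℂ] g k i)) U (𝓝 l)) :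
    maxNorm P P (∑ k, π (f k) ⊗ₜ[ℂ] π (g k)) ≤ l := by
  obtain ⟨V, hV⟩ := exists_elementary hAB
  obtain ⟨Q, _, ρ, hρ⟩ := exists_ultraproduct (iter U V) fun _ => A
  obtain ⟨M, _, μ, hμ⟩ := exists_ultraproduct V fun _ => A
  obtain ⟨Φ, hΦ⟩ := exists_embedding hV hμ
  choose r hr hrπ using fun p : P => hπ.surj (dir p)
  let lift : P → I → Ball B := fun p i => ⟨r p i, (hr p i).trans (norm_dir_le p)⟩
  refine (maxNorm_le_of_push hV hπ hρ (lift := lift) hrπ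
    (fun k => stretch_eq_push hV hπ hρ (hf k) (hrπ _))
    (fun k => stretch_eq_push hV hπ hρ (hg k) (hrπ _))).trans ?_
  have hb : ∀ {f : I → B}, Bdd f →
      Bdd fun x : I × (Ball B → Ball A) => stretch x.2 (f x.1) := by
    rintro f ⟨m, hm⟩
    exact ⟨m, fun x => (norm_stretch_le _ _).trans (hm _)⟩
  have hQ := hA _ (iter U V) Q ρ hρ n (fun k x => stretch x.2 (f k x.1))
    (fun k x => stretch x.2 (g k x.1)) (fun k => hb (hf k)) fun k => hb (hg k)
  refine le_of_forall_pos_le_add fun ε hε => le_of_tendsto hQ ?_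
  refine eventually_iter.2 ?_
  filter_upwards [hl.eventually_lt_const (lt_add_of_pos_right l hε)] with i hi
  have hM := hA _ V M μ hμ n (fun k s => stretch s (f k i)) (fun k s => stretch s (g k i))
    (fun k => ⟨_, fun s => norm_stretch_le _ _⟩) fun k => ⟨_, fun s => norm_stretch_le _ _⟩
  simp only [← hΦ] at hM
  have := (maxNorm_map_le Φ (fun k => f k i) fun k => g k i).trans_lt hi
  exact (hM.eventually_lt_const this).mono fun s hs => hs.le

end Transfer

/-- If `A` has property max-`U` for all ultrafilters `U`, then every
C*-algebra elementarily equivalent to `A` also has property max-`U` for all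
ultrafilters `U`. -/
theorem hasMaxU_of_elemEquiv (A : Type) [CStarAlgebra A]
    (hA : ∀ (I : Type) (U : Ultrafilter I), HasMaxU U A)
    (B : Type) [CStarAlgebra B] (hAB : ElemEquiv A B) :
    ∀ (I : Type) (U : Ultrafilter I), HasMaxU U B := by
  intro I U P _ π hπ n f g hf hg
  choose a ha using hf
  choose b hb using hg
  obtain ⟨l, hl⟩ := exists_tendsto_of_bdd U
    (fun i => maxNorm B B (∑ k, f k i ⊗ₜ[ℂ] g k i)) (∑ k, a k * b k) fun i => by
      rw [abs_of_nonneg (maxNorm_nonneg _ _)]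
      refine (maxNorm_sum_le _ _).trans (Finset.sum_le_sum fun k _ => ?_)
      exact mul_le_mul (ha k i) (hb k i) (norm_nonneg _) ((norm_nonneg _).trans (ha k i))
  rwa [le_antisymm (maxNorm_le_limit hA hAB hπ f g (fun k => ⟨_, ha k⟩) (fun k => ⟨_, hb k⟩) hl)
    (limit_le_maxNorm hπ f g (fun k => ⟨_, ha k⟩) (fun k => ⟨_, hb k⟩) hl)]

end
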